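/- arXiv:1405.4688 — 2 statements merged into one kernel-verified Lean document; each statement's English description precedes it below -/
import Mathlib

section
/- Let 0 < p ≤ 1. The map (A, B, C) ↦ (p+1) ∫₀¹ C^{1/2}(C^{-1/2}(λA + (1-λ)B)C^{-1/2})^p C^{1/2} dλ is jointly concave on triples of n×n positive definite complex matrices (in the Loewner order), and for positive real scalars t₁ ≠ t₂ and t₃ > 0 (i.e., 1×1 matrices) its value is ((t₁^{p+1} − t₂^{p+1})/(t₁ − t₂))·t₃^{1-p}, while for t₁ = t₂ it is (p+1)t₁^p t₃^{1-p}. Thus the function F₃(t₁,t₂,t₃) = ((t₁^{p+1}−t₂^{p+1})/(t₁−t₂))t₃^{1-p} (with value (1/(p+1))t₁^p t₃^{1-p} when t₁ = t₂, up to the factor p+1) extends to a jointly concave map on triples of positive definite matrices. -/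
open Matrix MeasureTheory
open scoped ComplexOrder

attribute [local instance] Matrix.normedAddCommGroup Matrix.normedSpace

/-- Matrix power by a real exponent via the functional calculus
(unitary diagonalization for Hermitian matrices; junk value otherwise). -/
noncomputable def mpow {n : ℕ} (A : Matrix (Fin n) (Fin n) ℂ) (q : ℝ) :
    Matrix (Fin n) (Fin n) ℂ :=
  if hA : A.IsHermitian then
    (hA.eigenvectorUnitary : Matrix (Fin n) (Fin n) ℂ) *
      Matrix.diagonal (fun i => ((hA.eigenvalues i ^ q : ℝ) : ℂ)) *
      (star (hA.eigenvectorUnitary : Matrix (Fin n) (Fin n) ℂ))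
  else 0

/-- `(A,B,C) ↦ (p+1) ∫₀¹ C^{1/2} (C^{-1/2}(λA + (1-λ)B)C^{-1/2})^p C^{1/2} dλ`. -/
noncomputable def F3map {n : ℕ} (p : ℝ) (A B C : Matrix (Fin n) (Fin n) ℂ) :
    Matrix (Fin n) (Fin n) ℂ :=
  (p + 1) • ∫ l in Set.Icc (0 : ℝ) 1,
    mpow C (1 / 2) *
      mpow (mpow C (-(1 / 2)) * (l • A + (1 - l) • B) * mpow C (-(1 / 2))) p *
        mpow C (1 / 2)

open CFC Ring Set
open scoped NNReal

/-! For `0 < p < 1`, the integral representation of `x ↦ x ^ p` gives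
`c #ₚ a = ∫ (t^(p-1) c - t^p c (t c + a)⁻¹ c) dμ(t)` over `t > 0`, for some measure `μ`. The map
`(c, d) ↦ c⋆ d⁻¹ c` is jointly convex, being the pointwise maximum over `z` of
`c⋆ z + z⋆ c - z⋆ d z`, which is real-linear in `(c, d)`. So `c #ₚ a` is jointly concave, and
averaging `c #ₚ (λ a + (1 - λ) b)` over `λ` preserves this. On scalars `c #ₚ a = a^p c^(1-p)`, and
the average over `λ` is the integral of a power function. -/

section StarRing

variable {R : Type*} [Ring R] [StarRing R]

theorem star_mul_ringInverse_mul_sub_eq {d : R} (hd : IsUnit d) (hd_sa : IsSelfAdjoint d)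
    (c z : R) :
    star c * d⁻¹ʳ * c - (star c * z + star z * c - star z * d * z) =
      star (c - d * z) * d⁻¹ʳ * (c - d * z) := by
  have hd_inv : d⁻¹ʳ * d = 1 := Ring.inverse_mul_cancel d hd
  have hd_mul : d * d⁻¹ʳ = 1 := Ring.mul_inverse_cancel d hd
  simp only [star_sub, star_mul, hd_sa.star_eq]
  calc _ = star c * d⁻¹ʳ * c - star c * z - star z * c + star z * d * z := by noncomm_ring
    _ = star c * d⁻¹ʳ * c - star c * (d⁻¹ʳ * d) * z - star z * (d * d⁻¹ʳ) * c
          + star z * (d * d⁻¹ʳ) * d * z := by simp only [hd_inv, hd_mul, mul_one]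
    _ = _ := by noncomm_ring

theorem add_sub_eq_star_mul_ringInverse_mul {d : R} (hd : IsUnit d) (hd_sa : IsSelfAdjoint d)
    (c : R) :
    star c * (d⁻¹ʳ * c) + star (d⁻¹ʳ * c) * c - star (d⁻¹ʳ * c) * d * (d⁻¹ʳ * c) =
      star c * d⁻¹ʳ * c := by
  have h := star_mul_ringInverse_mul_sub_eq hd hd_sa c (d⁻¹ʳ * c)
  rw [← mul_assoc d, Ring.mul_inverse_cancel d hd, one_mul, sub_self, mul_zero, sub_eq_zero] at h
  exact h.symm

end StarRing

section CStarAlgebra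

variable {A : Type*} [CStarAlgebra A] [PartialOrder A] [StarOrderedRing A]

theorem add_sub_le_star_mul_ringInverse_mul {d : A} (hd : IsStrictlyPositive d) (c z : A) :
    star c * z + star z * c - star z * d * z ≤ star c * d⁻¹ʳ * c := by
  rw [← sub_nonneg, star_mul_ringInverse_mul_sub_eq hd.isUnit hd.isSelfAdjoint]
  exact star_left_conjugate_nonneg hd.ringInverse.nonneg _

theorem convexOn_star_mul_ringInverse_mul :
    ConvexOn ℝ {x : A × A | IsStrictlyPositive x.2} fun x ↦ star x.1 * x.2⁻¹ʳ * x.1 := by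
  have hconv : Convex ℝ {x : A × A | IsStrictlyPositive x.2} :=
    (CStarAlgebra.convexOn_ringInverse (A := A)).1.linear_preimage (LinearMap.snd ℝ A A)
  refine ⟨hconv, ?_⟩
  rintro ⟨c₁, d₁⟩ h₁ ⟨c₂, d₂⟩ h₂ s t hs ht hst
  set c := s • c₁ + t • c₂
  set d := s • d₁ + t • d₂
  set z := d⁻¹ʳ * c
  have hd : IsStrictlyPositive d := hconv h₁ h₂ hs ht hst
  calc star c * d⁻¹ʳ * c = star c * z + star z * c - star z * d * z :=
        (add_sub_eq_star_mul_ringInverse_mul hd.isUnit hd.isSelfAdjoint c).symm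
    _ = s • (star c₁ * z + star z * c₁ - star z * d₁ * z)
          + t • (star c₂ * z + star z * c₂ - star z * d₂ * z) := by
        simp only [c, d, star_add, star_smul, star_trivial, mul_add, add_mul, smul_mul_assoc,
          mul_smul_comm, smul_add, smul_sub]
        abel
    _ ≤ s • (star c₁ * d₁⁻¹ʳ * c₁) + t • (star c₂ * d₂⁻¹ʳ * c₂) := by
        gcongr <;> exact add_sub_le_star_mul_ringInverse_mul ‹_› _ _

/-- The `p`-weighted geometric mean `c^{1/2} (c^{-1/2} a c^{-1/2})^p c^{1/2}` of `c` and `a`,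
usually written `c #ₚ a`. -/
noncomputable def weightedGeoMean (p : ℝ) (c a : A) : A :=
  conjSqrt c (conjSqrt c⁻¹ʳ a ^ p)

theorem conjSqrt_nonneg {c a : A} (ha : 0 ≤ a) : 0 ≤ conjSqrt c a := by
  simpa using conjSqrt_monotone (c := c) ha

theorem weightedGeoMean_zero {c a : A} (hc : 0 ≤ c) (ha : 0 ≤ a) :
    weightedGeoMean 0 c a = c := by
  rw [weightedGeoMean, CFC.rpow_zero _ (conjSqrt_nonneg ha), conjSqrt_one c hc]

theorem weightedGeoMean_one {c a : A} (hc : IsStrictlyPositive c) (ha : 0 ≤ a) :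
    weightedGeoMean 1 c a = a := by
  rw [weightedGeoMean, CFC.rpow_one _ (conjSqrt_nonneg ha), conjSqrt_conjSqrt_ringInverse c a hc]

theorem cfcₙ_rpowIntegrand₀₁_eq_sub_ringInverse {p t : ℝ} (hp : p ∈ Ioo 0 1) (ht : 0 < t) {a : A}
    (ha : 0 ≤ a) :
    cfcₙ (Real.rpowIntegrand₀₁ p t) a =
      t ^ (p - 1) • 1 - t ^ p • (t • 1 + a)⁻¹ʳ := by
  have hspec : ∀ x ∈ spectrum ℝ a, t + x ≠ 0 := fun x hx ↦
    (add_pos_of_pos_of_nonneg ht (spectrum_nonneg_of_nonneg ha hx)).ne'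
  have hinv : ContinuousOn (fun x : ℝ ↦ (t + x)⁻¹) (spectrum ℝ a) :=
    (continuousOn_const.add continuousOn_id).inv₀ hspec
  have hmul : ContinuousOn (fun x : ℝ ↦ t ^ p * (t + x)⁻¹) (spectrum ℝ a) :=
    continuousOn_const.mul hinv
  have hcont : ContinuousOn (Real.rpowIntegrand₀₁ p t) (quasispectrum ℝ a) :=
    (Real.continuousOn_rpowIntegrand₀₁_Ici hp ht).mono fun _ ↦
      quasispectrum_nonneg_of_nonneg a ha _
  rw [cfcₙ_eq_cfc, Real.rpowIntegrand₀₁_eq_sub hp.2.ne ht,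
    cfc_sub _ _ a continuousOn_const hmul, cfc_const _ a,
    cfc_const_mul _ _ a hinv, cfc_inv _ _ hspec, cfc_const_add .., cfc_id' ..]
  simp only [Algebra.algebraMap_eq_smul_one]

theorem conjSqrt_ringInverse_conjSqrt_ringInverse_eq_mul {c x : A} (hc : IsStrictlyPositive c) :
    conjSqrt c (conjSqrt c⁻¹ʳ x)⁻¹ʳ = c * x⁻¹ʳ * c := by
  have hsqrt : sqrt c * sqrt c = c := sqrt_mul_sqrt_self c hc.nonneg
  rw [ringInverse_conjSqrt _ _ hc.ringInverse, Ring.inverse_inverse hc.isUnit, conjSqrt_apply,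
    conjSqrt_apply]
  calc _ = sqrt c * sqrt c * x⁻¹ʳ * (sqrt c * sqrt c) := by noncomm_ring
    _ = _ := by rw [hsqrt]

theorem conjSqrt_cfcₙ_rpowIntegrand₀₁ {p t : ℝ} (hp : p ∈ Ioo 0 1) (ht : 0 < t) {c a : A}
    (hc : IsStrictlyPositive c) (ha : 0 ≤ a) :
    conjSqrt c (cfcₙ (Real.rpowIntegrand₀₁ p t) (conjSqrt c⁻¹ʳ a)) =
      t ^ (p - 1) • c - t ^ p • (star c * (t • c + a)⁻¹ʳ * c) := by
  have hconj : t • 1 + conjSqrt c⁻¹ʳ a = conjSqrt c⁻¹ʳ (t • c + a) := by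
    rw [map_add, map_smul, conjSqrt_ringInverse_self c hc]
  rw [cfcₙ_rpowIntegrand₀₁_eq_sub_ringInverse hp ht (conjSqrt_nonneg ha), map_sub, map_smul,
    map_smul, conjSqrt_one c hc.nonneg, hconj, conjSqrt_ringInverse_conjSqrt_ringInverse_eq_mul hc,
    hc.isSelfAdjoint.star_eq]

theorem convex_setOf_isStrictlyPositive_and_nonneg :
    Convex ℝ {x : A × A | IsStrictlyPositive x.1 ∧ 0 ≤ x.2} :=
  (CStarAlgebra.convexOn_ringInverse (A := A)).1.prod (convex_Ici 0)

theorem concaveOn_sub_star_mul_ringInverse_mul (r : ℝ) {s t : ℝ} (hs : 0 ≤ s) (ht : 0 < t) :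
    ConcaveOn ℝ {x : A × A | IsStrictlyPositive x.1 ∧ 0 ≤ x.2}
      fun x ↦ r • x.1 - s • (star x.1 * (t • x.1 + x.2)⁻¹ʳ * x.1) := by
  have hconv := convex_setOf_isStrictlyPositive_and_nonneg (A := A)
  let L : A × A →ₗ[ℝ] A × A :=
    (LinearMap.fst ℝ A A).prod (t • LinearMap.fst ℝ A A + LinearMap.snd ℝ A A)
  have hL : ConvexOn ℝ {x : A × A | IsStrictlyPositive x.1 ∧ 0 ≤ x.2}
      fun x ↦ star x.1 * (t • x.1 + x.2)⁻¹ʳ * x.1 :=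
    ((convexOn_star_mul_ringInverse_mul (A := A)).comp_linearMap L).subset
      (fun x hx ↦ (hx.1.smul ht).add_nonneg hx.2) hconv
  exact ((r • LinearMap.fst ℝ A A).concaveOn hconv).sub (hL.smul hs)

theorem concaveOn_weightedGeoMean_of_mem_Ioo {p : ℝ} (hp : p ∈ Ioo 0 1) :
    ConcaveOn ℝ {x : A × A | IsStrictlyPositive x.1 ∧ 0 ≤ x.2}
      fun x ↦ weightedGeoMean p x.1 x.2 := by
  lift p to ℝ≥0 using hp.1.le
  obtain ⟨μ, hμ⟩ := CFC.exists_measure_nnrpow_eq_integral_cfcₙ_rpowIntegrand₀₁ A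
    (show p ∈ Ioo 0 1 from mod_cast hp)
  have hrepr : EqOn (fun x : A × A ↦ weightedGeoMean p x.1 x.2)
      (fun x ↦ ∫ t in Ioi 0,
        conjSqrt x.1 (cfcₙ (Real.rpowIntegrand₀₁ p t) (conjSqrt x.1⁻¹ʳ x.2)) ∂μ)
      {x | IsStrictlyPositive x.1 ∧ 0 ≤ x.2} := fun x hx ↦ by
    obtain ⟨hint, hpow⟩ := hμ _ (conjSqrt_nonneg (c := x.1⁻¹ʳ) hx.2)
    simp only [weightedGeoMean]
    rw [← CFC.nnrpow_eq_rpow (mod_cast hp.1), hpow,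
      ContinuousLinearMap.integral_comp_comm _ hint]
  refine (integral_concaveOn_of_integrand_ae
    convex_setOf_isStrictlyPositive_and_nonneg ?_ fun x hx ↦
      (conjSqrt x.1).integrable_comp (hμ _ (conjSqrt_nonneg hx.2)).1).congr hrepr.symm
  filter_upwards [ae_restrict_mem measurableSet_Ioi] with t (ht : 0 < t)
  exact (concaveOn_sub_star_mul_ringInverse_mul _ (Real.rpow_nonneg ht.le _) ht).congr
    fun x hx ↦ (conjSqrt_cfcₙ_rpowIntegrand₀₁ hp ht hx.1 hx.2).symm

theorem concaveOn_weightedGeoMean {p : ℝ} (hp : p ∈ Icc 0 1) :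
    ConcaveOn ℝ {x : A × A | IsStrictlyPositive x.1 ∧ 0 ≤ x.2}
      fun x ↦ weightedGeoMean p x.1 x.2 := by
  have hconv := convex_setOf_isStrictlyPositive_and_nonneg (A := A)
  rcases eq_endpoints_or_mem_Ioo_of_mem_Icc hp with rfl | rfl | hp
  · exact ((LinearMap.fst ℝ A A).concaveOn hconv).congr fun x hx ↦
      (weightedGeoMean_zero hx.1.nonneg hx.2).symm
  · exact ((LinearMap.snd ℝ A A).concaveOn hconv).congr fun x hx ↦
      (weightedGeoMean_one hx.1 hx.2).symm
  · exact concaveOn_weightedGeoMean_of_mem_Ioo hp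

theorem continuousOn_weightedGeoMean {p : ℝ} (hp : 0 ≤ p) (c : A) :
    ContinuousOn (weightedGeoMean p c) {a | 0 ≤ a} := by
  have hpow : ContinuousOn (fun a : A ↦ a ^ p) {a | 0 ≤ a} :=
    continuousOn_id.cfc_nnreal_of_mem_nhdsSet (s := univ) (· ^ p) Filter.univ_mem
      (fun _ ha ↦ ha) (NNReal.continuous_rpow_const hp).continuousOn
  exact (conjSqrt c).continuous.comp_continuousOn <|
    hpow.comp (conjSqrt c⁻¹ʳ).continuous.continuousOn fun _ ha ↦ conjSqrt_nonneg ha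

theorem weightedGeoMean_smul_one (p : ℝ) {t s : ℝ} (ht : 0 ≤ t) (hs : 0 < s) :
    weightedGeoMean p (s • (1 : A)) (t • 1) = (t ^ p * s ^ (1 - p)) • 1 := by
  have hs_pos : IsStrictlyPositive (s • (1 : A)) := isStrictlyPositive_one.smul hs
  have hdiv : conjSqrt (s • (1 : A))⁻¹ʳ (t • 1) = (t / s) • 1 := by
    rw [show t • (1 : A) = (t / s) • s • 1 by rw [smul_smul, div_mul_cancel₀ _ hs.ne'], map_smul,
      conjSqrt_ringInverse_self _ hs_pos]
  have hpow : ((t / s) • (1 : A)) ^ p = (t / s) ^ p • 1 := by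
    lift t / s to ℝ≥0 using div_nonneg ht hs.le with r
    simpa only [Algebra.algebraMap_eq_smul_one, NNReal.smul_def, NNReal.coe_rpow] using
      CFC.rpow_algebraMap (A := A) (x := r) (y := p)
  rw [weightedGeoMean, hdiv, hpow, map_smul, conjSqrt_one _ hs_pos.nonneg, smul_smul,
    Real.div_rpow ht hs.le, Real.rpow_sub hs, Real.rpow_one]
  ring_nf

/-- The normalized integral `(p + 1) ∫₀¹ c #ₚ (λ a + (1 - λ) b) dλ` of weighted geometric means
along the segment from `b` to `a`. -/
noncomputable def integralGeoMean (p : ℝ) (a b c : A) : A :=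
  (p + 1) • ∫ l in Icc (0 : ℝ) 1, weightedGeoMean p c (l • a + (1 - l) • b)

theorem integrableOn_weightedGeoMean_segment {p : ℝ} (hp : 0 ≤ p) {a b : A} (ha : 0 ≤ a)
    (hb : 0 ≤ b) (c : A) :
    IntegrableOn (fun l : ℝ ↦ weightedGeoMean p c (l • a + (1 - l) • b)) (Icc 0 1) :=
  ((continuousOn_weightedGeoMean hp c).comp (by fun_prop) fun l hl ↦
    add_nonneg (smul_nonneg hl.1 ha) (smul_nonneg (sub_nonneg.2 hl.2) hb)).integrableOn_Icc

theorem concaveOn_integralGeoMean {p : ℝ} (hp : p ∈ Icc 0 1) :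
    ConcaveOn ℝ {x : A × A × A | 0 ≤ x.1 ∧ 0 ≤ x.2.1 ∧ IsStrictlyPositive x.2.2}
      fun x ↦ integralGeoMean p x.1 x.2.1 x.2.2 := by
  have hconv : Convex ℝ {x : A × A × A | 0 ≤ x.1 ∧ 0 ≤ x.2.1 ∧ IsStrictlyPositive x.2.2} :=
    (convex_Ici 0).prod ((convex_Ici 0).prod (CStarAlgebra.convexOn_ringInverse (A := A)).1)
  refine (integral_concaveOn_of_integrand_ae hconv ?_ fun x hx ↦
    integrableOn_weightedGeoMean_segment hp.1 hx.1 hx.2.1 x.2.2).smul (by linarith [hp.1])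
  filter_upwards [ae_restrict_mem measurableSet_Icc] with l hl
  let fst := LinearMap.fst ℝ A (A × A)
  let snd := LinearMap.snd ℝ A (A × A)
  let L : A × A × A →ₗ[ℝ] A × A :=
    (LinearMap.snd ℝ A A ∘ₗ snd).prod (l • fst + (1 - l) • LinearMap.fst ℝ A A ∘ₗ snd)
  have hL : ∀ x : A × A × A, 0 ≤ x.1 → 0 ≤ x.2.1 → 0 ≤ (L x).2 := fun x ha hb ↦
    add_nonneg (smul_nonneg (α := ℝ) hl.1 ha) (smul_nonneg (α := ℝ) (sub_nonneg.2 hl.2) hb)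
  exact ((concaveOn_weightedGeoMean (A := A) hp).comp_linearMap L).subset
    (fun x hx ↦ ⟨hx.2.2, hL x hx.1 hx.2.1⟩) hconv

theorem integral_rpow_segment {p : ℝ} (hp : -1 < p) {t₁ t₂ : ℝ} (h : t₁ ≠ t₂) :
    (p + 1) * ∫ l in (0 : ℝ)..1, (l * t₁ + (1 - l) * t₂) ^ p =
      (t₁ ^ (p + 1) - t₂ ^ (p + 1)) / (t₁ - t₂) := by
  have hsub : t₁ - t₂ ≠ 0 := sub_ne_zero.2 h
  have hp_ne : p + 1 ≠ 0 := by linarith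
  have haff (l : ℝ) : l * t₁ + (1 - l) * t₂ = (t₁ - t₂) * l + t₂ := by ring
  simp only [haff]
  rw [intervalIntegral.integral_comp_mul_add (fun x ↦ x ^ p) hsub, mul_zero, mul_one, zero_add,
    sub_add_cancel, integral_rpow (.inl hp), smul_eq_mul]
  field_simp

theorem integralGeoMean_smul_one_eq_integral (p : ℝ) {t₁ t₂ s : ℝ} (h₁ : 0 ≤ t₁) (h₂ : 0 ≤ t₂)
    (hs : 0 < s) :
    integralGeoMean p (t₁ • (1 : A)) (t₂ • 1) (s • 1) =
      ((p + 1) * (∫ l in (0 : ℝ)..1, (l * t₁ + (1 - l) * t₂) ^ p) * s ^ (1 - p)) • 1 := by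
  have hmean : EqOn (fun l : ℝ ↦ weightedGeoMean p (s • (1 : A)) (l • t₁ • 1 + (1 - l) • t₂ • 1))
      (fun l ↦ ((l * t₁ + (1 - l) * t₂) ^ p * s ^ (1 - p)) • 1) (Icc 0 1) := fun l hl ↦ by
    have hseg : 0 ≤ l * t₁ + (1 - l) * t₂ :=
      add_nonneg (mul_nonneg hl.1 h₁) (mul_nonneg (sub_nonneg.2 hl.2) h₂)
    simp only [smul_smul, ← add_smul, weightedGeoMean_smul_one p hseg hs]
  rw [integralGeoMean, setIntegral_congr_fun measurableSet_Icc hmean, integral_smul_const,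
    integral_mul_const, smul_smul, integral_Icc_eq_integral_Ioc,
    ← intervalIntegral.integral_of_le zero_le_one, mul_assoc]

theorem integralGeoMean_smul_one {p : ℝ} (hp : -1 < p) {t₁ t₂ s : ℝ} (h₁ : 0 ≤ t₁) (h₂ : 0 ≤ t₂)
    (hs : 0 < s) (h : t₁ ≠ t₂) :
    integralGeoMean p (t₁ • (1 : A)) (t₂ • 1) (s • 1) =
      ((t₁ ^ (p + 1) - t₂ ^ (p + 1)) / (t₁ - t₂) * s ^ (1 - p)) • 1 := by
  rw [integralGeoMean_smul_one_eq_integral p h₁ h₂ hs, integral_rpow_segment hp h]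

theorem integralGeoMean_smul_one_self (p : ℝ) {t s : ℝ} (ht : 0 ≤ t) (hs : 0 < s) :
    integralGeoMean p (t • (1 : A)) (t • 1) (s • 1) = ((p + 1) * t ^ p * s ^ (1 - p)) • 1 := by
  have hconst (l : ℝ) : l * t + (1 - l) * t = t := by ring
  rw [integralGeoMean_smul_one_eq_integral p ht ht hs]
  simp only [hconst, intervalIntegral.integral_const, sub_zero, one_smul]

theorem stmt10_general {p : ℝ} (hp : p ∈ Icc 0 1) :
    ConcaveOn ℝ {x : A × A × A | 0 ≤ x.1 ∧ 0 ≤ x.2.1 ∧ IsStrictlyPositive x.2.2}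
        (fun x ↦ integralGeoMean p x.1 x.2.1 x.2.2) ∧
      (∀ t₁ t₂ t₃ : ℝ, 0 ≤ t₁ → 0 ≤ t₂ → 0 < t₃ → t₁ ≠ t₂ →
        integralGeoMean p (t₁ • (1 : A)) (t₂ • 1) (t₃ • 1) =
          ((t₁ ^ (p + 1) - t₂ ^ (p + 1)) / (t₁ - t₂) * t₃ ^ (1 - p)) • 1) ∧
      ∀ t₁ t₃ : ℝ, 0 ≤ t₁ → 0 < t₃ →
        integralGeoMean p (t₁ • (1 : A)) (t₁ • 1) (t₃ • 1) =
          ((p + 1) * t₁ ^ p * t₃ ^ (1 - p)) • 1 :=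
  ⟨concaveOn_integralGeoMean hp,
    fun _ _ _ h₁ h₂ h₃ h ↦ integralGeoMean_smul_one (by linarith [hp.1]) h₁ h₂ h₃ h,
    fun _ _ h₁ h₃ ↦ integralGeoMean_smul_one_self p h₁ h₃⟩

end CStarAlgebra

section Matrix

open scoped MatrixOrder Matrix.Norms.L2Operator

variable {n : ℕ}

theorem mpow_eq_rpow {A : Matrix (Fin n) (Fin n) ℂ} (hA : A.PosSemidef) (q : ℝ) :
    mpow A q = A ^ q := by
  rw [CFC.rpow_eq_cfc_real hA.nonneg, hA.1.cfc_eq, mpow, dif_pos hA.1, Matrix.IsHermitian.cfc,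
    Unitary.conjStarAlgAut_apply]
  rfl

theorem mpow_one_half {C : Matrix (Fin n) (Fin n) ℂ} (hC : C.PosSemidef) :
    mpow C (1 / 2) = sqrt C := by
  rw [mpow_eq_rpow hC, sqrt_eq_rpow]

theorem mpow_neg_one_half {C : Matrix (Fin n) (Fin n) ℂ} (hC : C.PosDef) :
    mpow C (-(1 / 2)) = sqrt C⁻¹ʳ := by
  rw [mpow_eq_rpow hC.posSemidef, sqrt_ringInverse, sqrt_eq_rpow,
    CFC.inverse_rpow C _ (by norm_num) hC.isStrictlyPositive]

theorem mpow_mul_mpow_mul_mpow {A C : Matrix (Fin n) (Fin n) ℂ} (p : ℝ) (hA : A.PosSemidef)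
    (hC : C.PosDef) :
    mpow C (1 / 2) * mpow (mpow C (-(1 / 2)) * A * mpow C (-(1 / 2))) p * mpow C (1 / 2) =
      weightedGeoMean p C A := by
  rw [mpow_one_half hC.posSemidef, mpow_neg_one_half hC, ← conjSqrt_apply,
    ← conjSqrt_apply (c := C⁻¹ʳ), mpow_eq_rpow (conjSqrt_nonneg hA.nonneg).posSemidef,
    weightedGeoMean]

theorem integral_entrywise_norm_eq_integral {X : Type*} [MeasurableSpace X] (μ : Measure X)
    (f : X → Matrix (Fin n) (Fin n) ℂ) :
    @integral X (Matrix (Fin n) (Fin n) ℂ) Matrix.normedAddCommGroup Matrix.normedSpace _ μ f =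
      ∫ x, f x ∂μ :=
  -- The entrywise norm and the operator norm induce the same topology by definition, so the
  -- identity is a continuous linear equivalence between them.
  (@ContinuousLinearEquiv.integral_comp_comm X _ _ _ μ ℝ _ Matrix.normedAddCommGroup
    Matrix.normedSpace _ _ _ Matrix.normedSpace (.refl ℝ (Matrix (Fin n) (Fin n) ℂ)) f).symm

theorem F3map_eq_integralGeoMean {A B C : Matrix (Fin n) (Fin n) ℂ} (p : ℝ)
    (hA : A.PosSemidef) (hB : B.PosSemidef) (hC : C.PosDef) :
    F3map p A B C = integralGeoMean p A B C := by
  have hmean : EqOn (fun l : ℝ ↦ mpow C (1 / 2) *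
      mpow (mpow C (-(1 / 2)) * (l • A + (1 - l) • B) * mpow C (-(1 / 2))) p * mpow C (1 / 2))
      (fun l ↦ weightedGeoMean p C (l • A + (1 - l) • B)) (Icc 0 1) := fun l hl ↦
    mpow_mul_mpow_mul_mpow p ((hA.smul hl.1).add (hB.smul (sub_nonneg.2 hl.2))) hC
  rw [F3map, integral_entrywise_norm_eq_integral, setIntegral_congr_fun measurableSet_Icc hmean,
    integralGeoMean]

theorem concaveOn_F3map {p : ℝ} (hp : p ∈ Icc 0 1) :
    ConcaveOn ℝ {x : Matrix (Fin n) (Fin n) ℂ × Matrix (Fin n) (Fin n) ℂ ×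
        Matrix (Fin n) (Fin n) ℂ | x.1.PosSemidef ∧ x.2.1.PosSemidef ∧ x.2.2.PosDef}
      fun x ↦ F3map p x.1 x.2.1 x.2.2 := by
  simp only [← Matrix.nonneg_iff_posSemidef, ← Matrix.isStrictlyPositive_iff_posDef]
  exact (stmt10_general hp).1.congr fun x hx ↦
    (F3map_eq_integralGeoMean p hx.1.posSemidef hx.2.1.posSemidef hx.2.2.posDef).symm

end Matrix

theorem stmt10 (p : ℝ) (hp0 : 0 < p) (hp1 : p ≤ 1) :
    (∀ (n : ℕ) (A₁ B₁ C₁ A₂ B₂ C₂ : Matrix (Fin n) (Fin n) ℂ),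
      A₁.PosDef → B₁.PosDef → C₁.PosDef → A₂.PosDef → B₂.PosDef → C₂.PosDef →
      ∀ α : ℝ, 0 ≤ α → α ≤ 1 →
      (F3map p (α • A₁ + (1 - α) • A₂) (α • B₁ + (1 - α) • B₂)
          (α • C₁ + (1 - α) • C₂) -
        (α • F3map p A₁ B₁ C₁ + (1 - α) • F3map p A₂ B₂ C₂)).PosSemidef) ∧
    (∀ t₁ t₂ t₃ : ℝ, 0 < t₁ → 0 < t₂ → 0 < t₃ → t₁ ≠ t₂ →
      F3map p (t₁ • (1 : Matrix (Fin 1) (Fin 1) ℂ)) (t₂ • 1) (t₃ • 1) =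
        ((t₁ ^ (p + 1) - t₂ ^ (p + 1)) / (t₁ - t₂) * t₃ ^ (1 - p)) • 1) ∧
    (∀ t₁ t₃ : ℝ, 0 < t₁ → 0 < t₃ →
      F3map p (t₁ • (1 : Matrix (Fin 1) (Fin 1) ℂ)) (t₁ • 1) (t₃ • 1) =
        ((p + 1) * t₁ ^ p * t₃ ^ (1 - p)) • 1) := by
  have hp : p ∈ Icc 0 1 := ⟨hp0.le, hp1⟩
  have hscalar {t : ℝ} (ht : 0 < t) : (t • (1 : Matrix (Fin 1) (Fin 1) ℂ)).PosDef :=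
    PosDef.one.smul ht
  open scoped MatrixOrder Matrix.Norms.L2Operator in
  refine ⟨fun n A₁ B₁ C₁ A₂ B₂ C₂ hA₁ hB₁ hC₁ hA₂ hB₂ hC₂ α hα₀ hα₁ ↦ ?_,
    fun t₁ t₂ t₃ h₁ h₂ h₃ h ↦ ?_, fun t₁ t₃ h₁ h₃ ↦ ?_⟩
  · exact Matrix.le_iff.1 <| (concaveOn_F3map hp).2
      (x := (A₁, B₁, C₁)) (y := (A₂, B₂, C₂)) ⟨hA₁.posSemidef, hB₁.posSemidef, hC₁⟩
      ⟨hA₂.posSemidef, hB₂.posSemidef, hC₂⟩ hα₀ (sub_nonneg.2 hα₁) (add_sub_cancel α 1)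
  · rw [F3map_eq_integralGeoMean p (hscalar h₁).posSemidef (hscalar h₂).posSemidef (hscalar h₃)]
    exact (stmt10_general hp).2.1 t₁ t₂ t₃ h₁.le h₂.le h₃ h
  · rw [F3map_eq_integralGeoMean p (hscalar h₁).posSemidef (hscalar h₁).posSemidef (hscalar h₃)]
    exact (stmt10_general hp).2.2 t₁ t₃ h₁.le h₃
end

section
/- Let 0 < p ≤ 1 and λ ∈ [0,1]. The perspective map (A, B) ↦ B^{1/2}(λ(B^{-1/2}AB^{-1/2})^p + (1-λ)I)^{1/p}B^{1/2} is jointly concave on pairs of n×n positive definite complex matrices: for positive definite A₁, A₂, B₁, B₂ and α ∈ [0,1], with A = αA₁+(1-α)A₂ and B = αB₁+(1-α)B₂, B^{1/2}(λ(B^{-1/2}AB^{-1/2})^p + (1-λ)I)^{1/p}B^{1/2} ≥ α B₁^{1/2}(λ(B₁^{-1/2}A₁B₁^{-1/2})^p + (1-λ)I)^{1/p}B₁^{1/2} + (1-α) B₂^{1/2}(λ(B₂^{-1/2}A₂B₂^{-1/2})^p + (1-λ)I)^{1/p}B₂^{1/2} in the Loewner order. -/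
open Matrix
open scoped ComplexOrder

/-- The perspective map
`(A,B) ↦ B^{1/2}(λ(B^{-1/2}AB^{-1/2})^p + (1-λ)I)^{1/p}B^{1/2}`. -/
noncomputable def persp2 {n : ℕ} (lam p : ℝ) (A B : Matrix (Fin n) (Fin n) ℂ) :
    Matrix (Fin n) (Fin n) ℂ :=
  mpow B (1 / 2) *
    mpow (lam • mpow (mpow B (-(1 / 2)) * A * mpow B (-(1 / 2))) p + (1 - lam) • 1)
      (1 / p) *
    mpow B (1 / 2)

/-!
Call `f` good if its perspective `(A, B) ↦ B^{1/2} f(B^{-1/2} A B^{-1/2}) B^{1/2}` is jointly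
concave. The functions `1` and `x` are good. By simultaneous diagonalization of `A` and `B`, the
quadratic form at `v` of the perspective of a parallel sum `f g / (f + g)` is the minimum, over
`v = u + w`, of the form of `f` at `u` plus that of `g` at `w`, so parallel sums of good positive
functions are good. Weighted geometric means `f^{1-r} g^r` are integrals of parallel sums, hence
also good. Finally, with `s = λ x^p + (1 - λ)`, the iteration
`y ↦ λ y^{1-p} x^p + (1 - λ) y^{1-p} 1^p = s y^{1-p}` started at `y = 1` stays among the good
functions and converges to its fixed point `s^{1/p}`.
-/

section

open Filter MeasureTheory Topology
open scoped MatrixOrder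

variable {ι 𝕜 : Type*} [RCLike 𝕜]

lemma mul_div_add_mul_norm_add_sq_le {E : Type*} [SeminormedAddCommGroup E] {a b : ℝ} (ha : 0 < a)
    (hb : 0 < b) (u v : E) :
    a * b / (a + b) * ‖u + v‖ ^ 2 ≤ a * ‖u‖ ^ 2 + b * ‖v‖ ^ 2 := by
  have hsq : ‖u + v‖ ^ 2 ≤ (‖u‖ + ‖v‖) ^ 2 := by gcongr; exact norm_add_le u v
  rw [div_mul_eq_mul_div, div_le_iff₀ (by positivity)]
  nlinarith [mul_le_mul_of_nonneg_left hsq (mul_pos ha hb).le, sq_nonneg (a * ‖u‖ - b * ‖v‖)]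

lemma concaveOn_of_tendsto {E κ : Type*} [AddCommGroup E] [Module ℝ E] {l : Filter κ} [l.NeBot]
    {s : Set E} {F : κ → E → ℝ} {f : E → ℝ} (hF : ∀ k, ConcaveOn ℝ s (F k))
    (hlim : ∀ x ∈ s, Tendsto (fun k => F k x) l (𝓝 (f x))) : ConcaveOn ℝ s f := by
  obtain ⟨k₀⟩ := l.nonempty_of_neBot
  have hs : Convex ℝ s := (hF k₀).1
  refine ⟨hs, fun x hx y hy a b ha hb hab => ?_⟩
  exact le_of_tendsto_of_tendsto' (((hlim x hx).const_smul a).add ((hlim y hy).const_smul b))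
    (hlim _ (hs hx hy ha hb hab)) fun k => (hF k).2 hx hy ha hb hab

lemma mul_rpowIntegrand₀₁_div {r t a b : ℝ} (hr : r ∈ Set.Ioo 0 1) (ht : 0 < t) (ha : 0 < a)
    (hb : 0 < b) :
    a * Real.rpowIntegrand₀₁ r t (b / a) = t ^ (r - 1) / t * (t * a * b / (t * a + b)) := by
  rw [Real.rpowIntegrand₀₁_eq_pow_div hr ht.le (div_pos hb ha).le]
  field_simp

lemma rpow_mul_rpow_eq_const_mul_integral {r a b : ℝ} (hr : r ∈ Set.Ioo 0 1) (ha : 0 < a)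
    (hb : 0 < b) :
    a ^ (1 - r) * b ^ r = (∫ t in Set.Ioi 0, Real.rpowIntegrand₀₁ r t 1)⁻¹ *
      ∫ t in Set.Ioi 0, a * Real.rpowIntegrand₀₁ r t (b / a) := by
  rw [integral_const_mul, mul_left_comm,
    ← Real.rpow_eq_const_mul_integral hr (div_pos hb ha).le, Real.div_rpow hb.le ha.le,
    Real.rpow_sub ha, Real.rpow_one]
  ring

lemma mul_rpow_add_one_sub_pos (p : ℝ) {lam x : ℝ} (hl₀ : 0 ≤ lam) (hl₁ : lam ≤ 1) (hx : 0 < x) :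
    0 < lam * x ^ p + (1 - lam) := by
  have hxp : 0 < x ^ p := Real.rpow_pos_of_pos hx p
  rcases hl₁.eq_or_lt with rfl | hl₁
  · simpa using hxp
  · exact add_pos_of_nonneg_of_pos (by positivity) (sub_pos.2 hl₁)

lemma convex_setOf_posDef : Convex ℝ {A : Matrix ι ι 𝕜 | A.PosDef} :=
  convex_iff_forall_pos.2 fun _ hA _ hB _ _ ha hb _ => (hA.smul ha).add (hB.smul hb)

/-- The convex cone of pairs of positive definite matrices, the domain of the perspectives. -/
def posDefPairs (ι 𝕜 : Type*) [RCLike 𝕜] : Set (Matrix ι ι 𝕜 × Matrix ι ι 𝕜) :=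
  {A | A.PosDef} ×ˢ {B | B.PosDef}

lemma convex_posDefPairs : Convex ℝ (posDefPairs ι 𝕜) :=
  convex_setOf_posDef.prod convex_setOf_posDef

variable [Fintype ι]

lemma re_star_dotProduct_conjTranspose_mul_diagonal_mul [DecidableEq ι] (C : Matrix ι ι 𝕜)
    (d : ι → ℝ) (v : ι → 𝕜) :
    RCLike.re (star v ⬝ᵥ ((Cᴴ * diagonal (fun i => (d i : 𝕜)) * C) *ᵥ v)) =
      ∑ i, d i * ‖(C *ᵥ v) i‖ ^ 2 := by
  have hterm (z : 𝕜) (r : ℝ) : RCLike.re (star z * ((r : 𝕜) * z)) = r * ‖z‖ ^ 2 := by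
    rw [mul_left_comm, RCLike.re_ofReal_mul, RCLike.star_def, RCLike.conj_mul, ← RCLike.ofReal_pow,
      RCLike.ofReal_re]
  rw [← mulVec_mulVec, ← mulVec_mulVec, dotProduct_mulVec, ← star_mulVec]
  simp only [dotProduct, map_sum, mulVec_diagonal, Pi.star_apply, hterm]

lemma le_iff_re_dotProduct_mulVec_le {A B : Matrix ι ι 𝕜} (hA : A.IsHermitian)
    (hB : B.IsHermitian) :
    A ≤ B ↔ ∀ v, RCLike.re (star v ⬝ᵥ (A *ᵥ v)) ≤ RCLike.re (star v ⬝ᵥ (B *ᵥ v)) := by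
  rw [Matrix.le_iff, posSemidef_iff_dotProduct_mulVec, and_iff_right (hB.sub hA)]
  refine forall_congr' fun v => ?_
  rw [RCLike.nonneg_iff, and_iff_left ((hB.sub hA).im_star_dotProduct_mulVec_self v), sub_mulVec,
    dotProduct_sub, map_sub, sub_nonneg]

variable [DecidableEq ι]

lemma cfc_mul_cfc (f g : ℝ → ℝ) (A : Matrix ι ι 𝕜) :
    cfc f A * cfc g A = cfc (fun x => f x * g x) A :=
  (cfc_mul f g A (finite_real_spectrum.continuousOn f) (finite_real_spectrum.continuousOn g)).symm

lemma cfc_congr_of_posDef {f g : ℝ → ℝ} {A : Matrix ι ι 𝕜} (hA : A.PosDef)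
    (h : ∀ x, 0 < x → f x = g x) : cfc f A = cfc g A := by
  refine cfc_congr fun x hx => h x ?_
  rw [hA.1.spectrum_real_eq_range_eigenvalues] at hx
  obtain ⟨i, rfl⟩ := hx
  exact hA.eigenvalues_pos i

lemma cfc_rpow_half_mul_self {B : Matrix ι ι 𝕜} (hB : B.PosDef) :
    cfc (fun x : ℝ => x ^ (1 / 2 : ℝ)) B * cfc (fun x : ℝ => x ^ (1 / 2 : ℝ)) B = B := by
  rw [cfc_mul_cfc]
  refine (cfc_congr_of_posDef hB fun x hx => ?_).trans (cfc_id' ℝ B hB.1)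
  rw [← Real.rpow_add hx, add_halves, Real.rpow_one]

lemma cfc_rpow_half_mul_cfc_rpow_neg_half {B : Matrix ι ι 𝕜} (hB : B.PosDef) :
    cfc (fun x : ℝ => x ^ (1 / 2 : ℝ)) B * cfc (fun x : ℝ => x ^ (-(1 / 2) : ℝ)) B = 1 := by
  rw [cfc_mul_cfc]
  refine (cfc_congr_of_posDef hB fun x hx => ?_).trans (cfc_const_one ℝ B hB.1)
  rw [← Real.rpow_add hx, add_neg_cancel, Real.rpow_zero]

/-- The normalized matrix `B^{-1/2} A B^{-1/2}` of a pair, which measures `A` relative to `B`. -/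
noncomputable def relativeMatrix (A B : Matrix ι ι 𝕜) : Matrix ι ι 𝕜 :=
  cfc (fun x : ℝ => x ^ (-(1 / 2) : ℝ)) B * A * cfc (fun x : ℝ => x ^ (-(1 / 2) : ℝ)) B

/-- The noncommutative perspective `B^{1/2} f(B^{-1/2} A B^{-1/2}) B^{1/2}` of a real function `f`,
with all functions of matrices taken in the continuous functional calculus. -/
noncomputable def perspective (f : ℝ → ℝ) (A B : Matrix ι ι 𝕜) : Matrix ι ι 𝕜 :=
  cfc (fun x : ℝ => x ^ (1 / 2 : ℝ)) B * cfc f (relativeMatrix A B) *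
    cfc (fun x : ℝ => x ^ (1 / 2 : ℝ)) B

/-- The quadratic form `v ↦ v* P v` of the Hermitian matrix `P = perspective f A B`, as a real
number. -/
noncomputable def perspectiveForm (f : ℝ → ℝ) (A B : Matrix ι ι 𝕜) (v : ι → 𝕜) : ℝ :=
  RCLike.re (star v ⬝ᵥ (perspective f A B *ᵥ v))

lemma isHermitian_cfc (f : ℝ → ℝ) (A : Matrix ι ι 𝕜) : (cfc f A).IsHermitian :=
  cfc_predicate f A

lemma isHermitian_perspective (f : ℝ → ℝ) (A B : Matrix ι ι 𝕜) :
    (perspective f A B).IsHermitian := by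
  have h := isHermitian_conjTranspose_mul_mul (cfc (fun x : ℝ => x ^ (1 / 2 : ℝ)) B)
    (isHermitian_cfc f (relativeMatrix A B))
  rwa [(isHermitian_cfc _ B).eq] at h

lemma isHermitian_relativeMatrix {A : Matrix ι ι 𝕜} (hA : A.IsHermitian) (B : Matrix ι ι 𝕜) :
    (relativeMatrix A B).IsHermitian := by
  have h := isHermitian_conjTranspose_mul_mul (cfc (fun x : ℝ => x ^ (-(1 / 2) : ℝ)) B) hA
  rwa [(isHermitian_cfc _ B).eq] at h

lemma posDef_relativeMatrix {A B : Matrix ι ι 𝕜} (hA : A.PosDef) (hB : B.PosDef) :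
    (relativeMatrix A B).PosDef := by
  have hunit : IsUnit (cfc (fun x : ℝ => x ^ (-(1 / 2) : ℝ)) B) :=
    .of_mul_eq_one_right _ (cfc_rpow_half_mul_cfc_rpow_neg_half hB)
  have h := hA.conjTranspose_mul_mul_same (mulVec_injective_of_isUnit hunit)
  rwa [(isHermitian_cfc _ B).eq] at h

lemma perspective_one {A B : Matrix ι ι 𝕜} (hA : A.IsHermitian) (hB : B.PosDef) :
    perspective (fun _ => 1) A B = B := by
  rw [perspective, cfc_const_one ℝ _ (isHermitian_relativeMatrix hA B).isSelfAdjoint, mul_one,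
    cfc_rpow_half_mul_self hB]

lemma perspective_id {A B : Matrix ι ι 𝕜} (hA : A.IsHermitian) (hB : B.PosDef) :
    perspective (fun x => x) A B = A := by
  have hST := cfc_rpow_half_mul_cfc_rpow_neg_half hB
  have hTS := mul_eq_one_comm.1 hST
  rw [perspective, cfc_id' ℝ _ (isHermitian_relativeMatrix hA B).isSelfAdjoint, relativeMatrix]
  simp only [← mul_assoc, hST, one_mul]
  rw [mul_assoc, hTS, mul_one]

lemma exists_perspectiveForm_eq_sum {A B : Matrix ι ι 𝕜} (hA : A.PosDef) (hB : B.PosDef) :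
    ∃ C : Matrix ι ι 𝕜, IsUnit C ∧ ∃ x : ι → ℝ, (∀ i, 0 < x i) ∧
      ∀ f v, perspectiveForm f A B v = ∑ i, f (x i) * ‖(C *ᵥ v) i‖ ^ 2 := by
  have hX := posDef_relativeMatrix hA hB
  refine ⟨(hX.1.eigenvectorUnitary : Matrix ι ι 𝕜)ᴴ * cfc (fun x : ℝ => x ^ (1 / 2 : ℝ)) B,
    ?_, hX.1.eigenvalues, hX.eigenvalues_pos, fun f v => ?_⟩
  · exact (Unitary.isUnit_coe (U := star hX.1.eigenvectorUnitary)).mul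
      (.of_mul_eq_one _ (cfc_rpow_half_mul_cfc_rpow_neg_half hB))
  · rw [← re_star_dotProduct_conjTranspose_mul_diagonal_mul, conjTranspose_mul,
      conjTranspose_conjTranspose, (isHermitian_cfc _ B).eq, perspectiveForm, perspective,
      hX.1.cfc_eq, IsHermitian.cfc, Unitary.conjStarAlgAut_apply, star_eq_conjTranspose]
    simp only [mul_assoc, Function.comp_def]

/-- The perspective of `f` on matrices indexed by `ι` over `𝕜` is jointly concave for the Loewner
order. -/
def HasConcavePerspective (ι 𝕜 : Type*) [RCLike 𝕜] [Fintype ι] [DecidableEq ι] (f : ℝ → ℝ) :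
    Prop :=
  ConcaveOn ℝ (posDefPairs ι 𝕜) fun P => perspective f P.1 P.2

lemma hasConcavePerspective_iff_perspectiveForm {f : ℝ → ℝ} :
    HasConcavePerspective ι 𝕜 f ↔
      ∀ v, ConcaveOn ℝ (posDefPairs ι 𝕜) fun P => perspectiveForm f P.1 P.2 v := by
  have hherm (a b : ℝ) (P Q : Matrix ι ι 𝕜 × Matrix ι ι 𝕜) :
      (a • perspective f P.1 P.2 + b • perspective f Q.1 Q.2).IsHermitian :=
    ((isHermitian_perspective f P.1 P.2).smul (.all a)).add
      ((isHermitian_perspective f Q.1 Q.2).smul (.all b))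
  simp only [HasConcavePerspective, ConcaveOn, convex_posDefPairs, true_and,
    le_iff_re_dotProduct_mulVec_le (hherm _ _ _ _) (isHermitian_perspective f _ _),
    perspectiveForm, add_mulVec, smul_mulVec, dotProduct_add, dotProduct_smul, map_add,
    RCLike.smul_re, smul_eq_mul]
  exact ⟨fun h v _ hP _ hQ _ _ ha hb hab => h hP hQ ha hb hab v,
    fun h _ hP _ hQ _ _ ha hb hab v => h v hP hQ ha hb hab⟩

/-- The pointwise parallel sum `f : g = (f⁻¹ + g⁻¹)⁻¹`, written without inverses of the
summands. -/
noncomputable def parallelSum (f g : ℝ → ℝ) (x : ℝ) : ℝ :=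
  f x * g x / (f x + g x)

section PerspectiveForm

variable {A B : Matrix ι ι 𝕜} {f g : ℝ → ℝ}

lemma perspectiveForm_congr (hA : A.PosDef) (hB : B.PosDef) (h : ∀ x, 0 < x → f x = g x)
    (v : ι → 𝕜) : perspectiveForm f A B v = perspectiveForm g A B v := by
  obtain ⟨C, -, x, hx, hform⟩ := exists_perspectiveForm_eq_sum hA hB
  simp only [hform, h _ (hx _)]

lemma perspectiveForm_linearCombination (hA : A.PosDef) (hB : B.PosDef) (f g : ℝ → ℝ) (a b : ℝ)
    (v : ι → 𝕜) :
    perspectiveForm (fun x => a * f x + b * g x) A B v =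
      a * perspectiveForm f A B v + b * perspectiveForm g A B v := by
  obtain ⟨C, -, x, -, hform⟩ := exists_perspectiveForm_eq_sum hA hB
  simp only [hform, Finset.mul_sum, ← Finset.sum_add_distrib]
  exact Finset.sum_congr rfl fun i _ => by ring

lemma tendsto_perspectiveForm {κ : Type*} {l : Filter κ} {F : κ → ℝ → ℝ} (hA : A.PosDef)
    (hB : B.PosDef) (hlim : ∀ x, 0 < x → Tendsto (fun k => F k x) l (𝓝 (f x))) (v : ι → 𝕜) :
    Tendsto (fun k => perspectiveForm (F k) A B v) l (𝓝 (perspectiveForm f A B v)) := by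
  obtain ⟨C, -, x, hx, hform⟩ := exists_perspectiveForm_eq_sum hA hB
  simp only [hform]
  exact tendsto_finsetSum _ fun i _ => (hlim _ (hx i)).mul_const _

lemma integrable_perspectiveForm {Ω : Type*} [MeasurableSpace Ω] {μ : Measure Ω} {F : Ω → ℝ → ℝ}
    (hA : A.PosDef) (hB : B.PosDef) (hF : ∀ x, 0 < x → Integrable (fun t => F t x) μ)
    (v : ι → 𝕜) : Integrable (fun t => perspectiveForm (F t) A B v) μ := by
  obtain ⟨C, -, x, hx, hform⟩ := exists_perspectiveForm_eq_sum hA hB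
  simp only [hform]
  exact integrable_finsetSum _ fun i _ => (hF _ (hx i)).mul_const _

lemma perspectiveForm_integral {Ω : Type*} [MeasurableSpace Ω] {μ : Measure Ω} {F : Ω → ℝ → ℝ}
    (hA : A.PosDef) (hB : B.PosDef) (hF : ∀ x, 0 < x → Integrable (fun t => F t x) μ)
    (v : ι → 𝕜) :
    perspectiveForm (fun x => ∫ t, F t x ∂μ) A B v = ∫ t, perspectiveForm (F t) A B v ∂μ := by
  obtain ⟨C, -, x, hx, hform⟩ := exists_perspectiveForm_eq_sum hA hB
  simp only [hform]
  rw [integral_finsetSum _ fun i _ => (hF _ (hx i)).mul_const _]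
  simp only [integral_mul_const]

lemma perspectiveForm_parallelSum_add_le (hA : A.PosDef) (hB : B.PosDef)
    (hf : ∀ x, 0 < x → 0 < f x) (hg : ∀ x, 0 < x → 0 < g x) (u w : ι → 𝕜) :
    perspectiveForm (parallelSum f g) A B (u + w) ≤
      perspectiveForm f A B u + perspectiveForm g A B w := by
  obtain ⟨C, -, x, hx, hform⟩ := exists_perspectiveForm_eq_sum hA hB
  simp only [hform, mulVec_add, Pi.add_apply, ← Finset.sum_add_distrib]
  exact Finset.sum_le_sum fun i _ =>
    mul_div_add_mul_norm_add_sq_le (hf _ (hx i)) (hg _ (hx i)) _ _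

lemma exists_add_eq_and_perspectiveForm_parallelSum_eq (hA : A.PosDef) (hB : B.PosDef)
    (hf : ∀ x, 0 < x → 0 < f x) (hg : ∀ x, 0 < x → 0 < g x) (v : ι → 𝕜) :
    ∃ u w, u + w = v ∧
      perspectiveForm (parallelSum f g) A B v =
        perspectiveForm f A B u + perspectiveForm g A B w := by
  obtain ⟨C, hC, x, hx, hform⟩ := exists_perspectiveForm_eq_sum hA hB
  let θ i : ℝ := g (x i) / (f (x i) + g (x i))
  obtain ⟨u, hu⟩ := mulVec_surjective_iff_isUnit.2 hC fun i => (θ i : 𝕜) * (C *ᵥ v) i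
  have hw (i : ι) : (C *ᵥ (v - u)) i = ((1 - θ i : ℝ) : 𝕜) * (C *ᵥ v) i := by
    rw [mulVec_sub, hu, Pi.sub_apply]
    push_cast
    ring
  refine ⟨u, v - u, add_sub_cancel u v, ?_⟩
  simp only [hform, hu, hw, norm_mul, mul_pow, RCLike.norm_ofReal, sq_abs,
    ← Finset.sum_add_distrib]
  refine Finset.sum_congr rfl fun i _ => ?_
  have hpos : 0 < f (x i) + g (x i) := add_pos (hf _ (hx i)) (hg _ (hx i))
  simp only [parallelSum, θ]
  field_simp
  ring

end PerspectiveForm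

namespace HasConcavePerspective

variable {f g : ℝ → ℝ}

lemma one : HasConcavePerspective ι 𝕜 fun _ => 1 :=
  ((LinearMap.snd ℝ (Matrix ι ι 𝕜) (Matrix ι ι 𝕜)).concaveOn convex_posDefPairs).congr fun _ hP =>
    (perspective_one hP.1.1 hP.2).symm

lemma id : HasConcavePerspective ι 𝕜 fun x => x :=
  ((LinearMap.fst ℝ (Matrix ι ι 𝕜) (Matrix ι ι 𝕜)).concaveOn convex_posDefPairs).congr fun _ hP =>
    (perspective_id hP.1.1 hP.2).symm

lemma congr (hf : HasConcavePerspective ι 𝕜 f) (h : ∀ x, 0 < x → f x = g x) :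
    HasConcavePerspective ι 𝕜 g := by
  rw [hasConcavePerspective_iff_perspectiveForm] at hf ⊢
  exact fun v => (hf v).congr fun P hP => perspectiveForm_congr hP.1 hP.2 h v

lemma linearCombination (hf : HasConcavePerspective ι 𝕜 f) (hg : HasConcavePerspective ι 𝕜 g)
    {a b : ℝ} (ha : 0 ≤ a) (hb : 0 ≤ b) :
    HasConcavePerspective ι 𝕜 fun x => a * f x + b * g x := by
  rw [hasConcavePerspective_iff_perspectiveForm] at hf hg ⊢
  exact fun v => (((hf v).smul ha).add ((hg v).smul hb)).congr fun P hP =>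
    (perspectiveForm_linearCombination hP.1 hP.2 f g a b v).symm

lemma const_mul (hf : HasConcavePerspective ι 𝕜 f) {a : ℝ} (ha : 0 ≤ a) :
    HasConcavePerspective ι 𝕜 fun x => a * f x :=
  (hf.linearCombination hf ha le_rfl).congr fun x _ => by ring

lemma of_tendsto {κ : Type*} {l : Filter κ} [l.NeBot] {F : κ → ℝ → ℝ}
    (hF : ∀ k, HasConcavePerspective ι 𝕜 (F k))
    (hlim : ∀ x, 0 < x → Tendsto (fun k => F k x) l (𝓝 (f x))) :
    HasConcavePerspective ι 𝕜 f :=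
  hasConcavePerspective_iff_perspectiveForm.2 fun v =>
    concaveOn_of_tendsto (fun k => hasConcavePerspective_iff_perspectiveForm.1 (hF k) v)
      fun _ hP => tendsto_perspectiveForm hP.1 hP.2 hlim v

lemma integral {Ω : Type*} [MeasurableSpace Ω] {μ : Measure Ω} {F : Ω → ℝ → ℝ}
    (hF : ∀ᵐ t ∂μ, HasConcavePerspective ι 𝕜 (F t))
    (hint : ∀ x, 0 < x → Integrable (fun t => F t x) μ) :
    HasConcavePerspective ι 𝕜 fun x => ∫ t, F t x ∂μ :=
  hasConcavePerspective_iff_perspectiveForm.2 fun v =>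
    (integral_concaveOn_of_integrand_ae convex_posDefPairs
      (hF.mono fun _ ht => hasConcavePerspective_iff_perspectiveForm.1 ht v)
      fun _ hP => integrable_perspectiveForm hP.1 hP.2 hint v).congr
      fun _ hP => (perspectiveForm_integral hP.1 hP.2 hint v).symm

lemma parallelSum (hf : HasConcavePerspective ι 𝕜 f) (hg : HasConcavePerspective ι 𝕜 g)
    (hf₀ : ∀ x, 0 < x → 0 < f x) (hg₀ : ∀ x, 0 < x → 0 < g x) :
    HasConcavePerspective ι 𝕜 (parallelSum f g) := by
  rw [hasConcavePerspective_iff_perspectiveForm] at hf hg ⊢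
  refine fun v => ⟨convex_posDefPairs, fun P hP Q hQ a b ha hb hab => ?_⟩
  have hPQ := convex_posDefPairs hP hQ ha hb hab
  obtain ⟨u, w, rfl, hmin⟩ :=
    exists_add_eq_and_perspectiveForm_parallelSum_eq hPQ.1 hPQ.2 hf₀ hg₀ v
  have hP_le := perspectiveForm_parallelSum_add_le hP.1 hP.2 hf₀ hg₀ u w
  have hQ_le := perspectiveForm_parallelSum_add_le hQ.1 hQ.2 hf₀ hg₀ u w
  have hf_le := (hf u).2 hP hQ ha hb hab
  have hg_le := (hg w).2 hP hQ ha hb hab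
  simp only [smul_eq_mul] at hf_le hg_le ⊢
  rw [hmin]
  linarith [mul_le_mul_of_nonneg_left hP_le ha, mul_le_mul_of_nonneg_left hQ_le hb]

lemma rpow_mul_rpow (hf : HasConcavePerspective ι 𝕜 f) (hg : HasConcavePerspective ι 𝕜 g)
    (hf₀ : ∀ x, 0 < x → 0 < f x) (hg₀ : ∀ x, 0 < x → 0 < g x) {r : ℝ} (hr₀ : 0 ≤ r) (hr₁ : r ≤ 1) :
    HasConcavePerspective ι 𝕜 fun x => f x ^ (1 - r) * g x ^ r := by
  rcases hr₀.eq_or_lt with rfl | hr₀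
  · simpa using hf
  rcases hr₁.eq_or_lt with rfl | hr₁
  · simpa using hg
  have hr : r ∈ Set.Ioo 0 1 := ⟨hr₀, hr₁⟩
  have hquot (x : ℝ) (hx : 0 < x) : 0 ≤ g x / f x := (div_pos (hg₀ x hx) (hf₀ x hx)).le
  have hintegrand (t : ℝ) (ht : 0 < t) :
      HasConcavePerspective ι 𝕜 fun x => f x * Real.rpowIntegrand₀₁ r t (g x / f x) :=
    (((hf.const_mul ht.le).parallelSum hg (fun x hx => mul_pos ht (hf₀ x hx)) hg₀).const_mul
      (a := t ^ (r - 1) / t) (by positivity)).congr fun x hx =>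
        (mul_rpowIntegrand₀₁_div hr ht (hf₀ x hx) (hg₀ x hx)).symm
  have hint := integral (μ := volume.restrict (Set.Ioi 0))
    (ae_restrict_of_forall_mem measurableSet_Ioi hintegrand) fun x hx =>
      (Real.integrableOn_rpowIntegrand₀₁_Ioi hr (hquot x hx)).const_mul (f x)
  exact (hint.const_mul (inv_nonneg.2 (Real.integral_rpowIntegrand₀₁_one_pos hr).le)).congr
    fun x hx => (rpow_mul_rpow_eq_const_mul_integral hr (hf₀ x hx) (hg₀ x hx)).symm

lemma powerMean_iterate {p lam : ℝ} (hp₀ : 0 < p) (hp₁ : p ≤ 1) (hl₀ : 0 ≤ lam) (hl₁ : lam ≤ 1)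
    (k : ℕ) :
    HasConcavePerspective ι 𝕜 fun x => (lam * x ^ p + (1 - lam)) ^ ((1 - (1 - p) ^ k) / p) := by
  have hs (x : ℝ) (hx : 0 < x) := mul_rpow_add_one_sub_pos p hl₀ hl₁ hx
  induction k with
  | zero => simpa using one
  | succ k ih =>
    have hs_rpow (x : ℝ) (hx : 0 < x) := Real.rpow_pos_of_pos (hs x hx) ((1 - (1 - p) ^ k) / p)
    refine ((ih.rpow_mul_rpow id hs_rpow (fun _ hx => hx) hp₀.le hp₁).linearCombination
      (ih.rpow_mul_rpow one hs_rpow (fun _ _ => one_pos) hp₀.le hp₁)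
      hl₀ (sub_nonneg.2 hl₁)).congr fun x hx => ?_
    have hexp : (1 - (1 - p) ^ (k + 1)) / p = (1 - (1 - p) ^ k) / p * (1 - p) + 1 := by
      field_simp
      ring
    rw [hexp, Real.rpow_add_one (hs x hx).ne', Real.rpow_mul (hs x hx).le, Real.one_rpow]
    ring

end HasConcavePerspective

theorem stmt15_general {p lam : ℝ} (hp0 : 0 < p) (hp1 : p ≤ 1) (hl0 : 0 ≤ lam) (hl1 : lam ≤ 1) :
    HasConcavePerspective ι 𝕜 fun x => (lam * x ^ p + (1 - lam)) ^ (1 / p) := by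
  refine .of_tendsto (l := atTop) (.powerMean_iterate hp0 hp1 hl0 hl1) fun x hx => ?_
  have hpow : Tendsto (fun k : ℕ => (1 - p) ^ k) atTop (𝓝 0) :=
    tendsto_pow_atTop_nhds_zero_of_lt_one (sub_nonneg.2 hp1) (sub_lt_self 1 hp0)
  have hexp : Tendsto (fun k : ℕ => (1 - (1 - p) ^ k) / p) atTop (𝓝 (1 / p)) := by
    simpa using (hpow.const_sub 1).div_const p
  exact tendsto_const_nhds.rpow hexp (.inl (mul_rpow_add_one_sub_pos p hl0 hl1 hx).ne')

lemma mpow_eq_cfc {n : ℕ} (A : Matrix (Fin n) (Fin n) ℂ) (q : ℝ) :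
    mpow A q = cfc (fun x : ℝ => x ^ q) A := by
  by_cases hA : A.IsHermitian
  · rw [hA.cfc_eq, mpow, dif_pos hA, IsHermitian.cfc, Unitary.conjStarAlgAut_apply]
    rfl
  · rw [mpow, dif_neg hA, cfc_apply_of_not_predicate (p := IsSelfAdjoint) A hA]

lemma persp2_eq_perspective {n : ℕ} (lam p : ℝ) {A : Matrix (Fin n) (Fin n) ℂ}
    (hA : A.IsHermitian) (B : Matrix (Fin n) (Fin n) ℂ) :
    persp2 lam p A B = perspective (fun x => (lam * x ^ p + (1 - lam)) ^ (1 / p)) A B := by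
  have hX := (isHermitian_relativeMatrix hA B).isSelfAdjoint
  have hfin := finite_real_spectrum (A := relativeMatrix A B)
  have hinner : lam • cfc (fun x : ℝ => x ^ p) (relativeMatrix A B) + (1 - lam) • 1 =
      cfc (fun x : ℝ => lam * x ^ p + (1 - lam)) (relativeMatrix A B) := by
    rw [cfc_add_const _ _ _ (hfin.continuousOn _) hX, cfc_const_mul _ _ _ (hfin.continuousOn _),
      Algebra.algebraMap_eq_smul_one]
  simp only [persp2, mpow_eq_cfc, perspective]
  rw [← relativeMatrix, hinner,
    cfc_comp' (fun y : ℝ => y ^ (1 / p)) (fun x : ℝ => lam * x ^ p + (1 - lam)) _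
      ((hfin.image _).continuousOn _) (hfin.continuousOn _) hX]

lemma concaveOn_persp2 {n : ℕ} {p lam : ℝ} (hp0 : 0 < p) (hp1 : p ≤ 1) (hl0 : 0 ≤ lam)
    (hl1 : lam ≤ 1) : ConcaveOn ℝ (posDefPairs (Fin n) ℂ) fun P => persp2 lam p P.1 P.2 :=
  ConcaveOn.congr (stmt15_general hp0 hp1 hl0 hl1) fun P hP =>
    (persp2_eq_perspective lam p hP.1.1 P.2).symm

end

theorem stmt15 {n : ℕ} (p lam : ℝ) (hp0 : 0 < p) (hp1 : p ≤ 1)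
    (hl0 : 0 ≤ lam) (hl1 : lam ≤ 1)
    (A₁ A₂ B₁ B₂ : Matrix (Fin n) (Fin n) ℂ)
    (hA₁ : A₁.PosDef) (hA₂ : A₂.PosDef) (hB₁ : B₁.PosDef) (hB₂ : B₂.PosDef)
    (α : ℝ) (hα0 : 0 ≤ α) (hα1 : α ≤ 1) :
    (persp2 lam p (α • A₁ + (1 - α) • A₂) (α • B₁ + (1 - α) • B₂) -
      (α • persp2 lam p A₁ B₁ + (1 - α) • persp2 lam p A₂ B₂)).PosSemidef := by
  have h₁ : (A₁, B₁) ∈ posDefPairs (Fin n) ℂ := ⟨hA₁, hB₁⟩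
  have h₂ : (A₂, B₂) ∈ posDefPairs (Fin n) ℂ := ⟨hA₂, hB₂⟩
  exact Matrix.le_iff.1 <|
    (concaveOn_persp2 hp0 hp1 hl0 hl1).2 h₁ h₂ hα0 (sub_nonneg.2 hα1) (add_sub_cancel α 1)
end
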